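/- arXiv:1303.3122 — 3 statements merged into one kernel-verified Lean document; each statement's English description precedes it below -/
import Mathlib

section
/- Let α ∈ (0, 1) and define H_α(t) = h_α(t)/α − h_{α−1}(t)/(α−1) for t > 0, where h_β(t) = (1 + 1/t)^β. Then for every integer m ≥ 1 and every t > 0, the m-th derivative of H_α satisfies H_α^(m)(t) = ((-1)^m / (t^m (1+t)^{m+1})) · (1 + 1/t)^α · Σ_{k=0}^{m-1} b_{α,m,k} t^k, where b_{α,m,k} = k! · C(m+1,k) · C(m-1,k) · Π_{ℓ=1}^{m-k-1} (α + ℓ). -/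
open Real Finset

noncomputable def cc (α : ℝ) (n k : ℕ) : ℝ :=
  (k.factorial : ℝ) * ((n + 2).choose k : ℝ) * (n.choose k : ℝ) *
    ∏ ℓ ∈ Finset.range (n - k), (α + (ℓ + 1))

noncomputable def PP (α : ℝ) (n : ℕ) (t : ℝ) : ℝ := ∑ k ∈ Finset.range (n + 1), cc α n k * t ^ k

noncomputable def PD (α : ℝ) (n : ℕ) (t : ℝ) : ℝ :=
  ∑ k ∈ Finset.range (n + 1), cc α n k * (k * t ^ (k - 1))

noncomputable def GG (α : ℝ) (n : ℕ) (t : ℝ) : ℝ :=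
  (-1 : ℝ) ^ (n + 1) / (t ^ (n + 1) * (1 + t) ^ (n + 2)) * (1 + 1 / t) ^ α * PP α n t

lemma cc_top (α : ℝ) (n : ℕ) : cc α n (n + 1) = 0 := by
  simp [cc]

lemma cc_zero (α : ℝ) (n : ℕ) : cc α (n + 1) 0 = (α + n + 1) * cc α n 0 := by
  simp [cc, Finset.prod_range_succ]; ring

lemma comb (n j : ℕ) (hj : j ≤ n) :
    ((j : ℝ) + 1) * ((n + 3).choose (j + 1) : ℝ) * ((n + 1).choose (j + 1) : ℝ) =
      (j + 1) * ((n + 2).choose (j + 1) : ℝ) * (n.choose (j + 1) : ℝ) +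
        (2 * n + 3 - j) * ((n + 2).choose j : ℝ) * (n.choose j : ℝ) := by
  have h1 := Nat.choose_succ_right_eq (n + 2) j
  have h2 := Nat.choose_succ_right_eq n j
  have h1' : ((n + 2).choose (j + 1) : ℝ) * (j + 1) = (n + 2).choose j * (n + 2 - j) := by
    have := congrArg (Nat.cast (R := ℝ)) h1
    rw [Nat.cast_mul, Nat.cast_mul, Nat.cast_sub (by omega)] at this
    push_cast at this
    exact this
  have h2' : (n.choose (j + 1) : ℝ) * (j + 1) = n.choose j * (n - j) := by
    have := congrArg (Nat.cast (R := ℝ)) h2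
    rw [Nat.cast_mul, Nat.cast_mul, Nat.cast_sub (by omega)] at this
    push_cast at this
    exact this
  rw [Nat.choose_succ_succ (n + 2) j, Nat.choose_succ_succ n j]
  push_cast
  linear_combination (n.choose j : ℝ) * h1' + ((n + 2).choose j : ℝ) * h2'

lemma cc_succ (α : ℝ) (n j : ℕ) (hj : j ≤ n) :
    cc α (n + 1) (j + 1) = (α + n - j) * cc α n (j + 1) + (2 * n + 3 - j) * cc α n j := by
  have h := comb n j hj
  have hQ : (n.choose (j + 1) : ℝ) * ∏ ℓ ∈ Finset.range (n - j), (α + (ℓ + 1)) =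
      (α + n - j) * ((n.choose (j + 1) : ℝ) *
        ∏ ℓ ∈ Finset.range (n - (j + 1)), (α + (ℓ + 1))) := by
    rcases hj.lt_or_eq with h | h
    · obtain ⟨d, rfl⟩ := Nat.exists_eq_add_of_lt h
      rw [show j + d + 1 - j = d + 1 by omega, show j + d + 1 - (j + 1) = d by omega,
        Finset.prod_range_succ]
      push_cast
      ring
    · subst h; simp
  simp only [cc]
  rw [show n + 1 - (j + 1) = n - j by omega, Nat.factorial_succ]
  push_cast
  rw [show n + 1 + 2 = n + 3 by omega]
  linear_combination (j.factorial : ℝ) * (∏ ℓ ∈ Finset.range (n - j), (α + (ℓ + 1))) * h +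
    ((j : ℝ) + 1) * j.factorial * ((n + 2).choose (j + 1) : ℝ) * hQ

lemma PP_rec (α : ℝ) (n : ℕ) (t : ℝ) :
    PP α (n + 1) t = (α + (n + 1) * (1 + t) + (n + 2) * t) * PP α n t
      - t * (1 + t) * PD α n t := by
  have e1 : (α + (n + 1) * (1 + t) + (n + 2) * t) * PP α n t - t * (1 + t) * PD α n t
      = ∑ k ∈ Finset.range (n + 1), (α + n + 1 - k) * cc α n k * t ^ k +
        ∑ k ∈ Finset.range (n + 1), (2 * n + 3 - k) * cc α n k * t ^ (k + 1) := by
    rw [PP, PD, Finset.mul_sum, Finset.mul_sum, ← Finset.sum_sub_distrib,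
      ← Finset.sum_add_distrib]
    refine Finset.sum_congr rfl fun k _ => ?_
    rcases k with _ | k
    · simp; ring
    · simp only [Nat.add_sub_cancel]; push_cast; ring
  have e2 : ∑ k ∈ Finset.range (n + 1), (α + n + 1 - k) * cc α n k * t ^ k =
      ∑ k ∈ Finset.range (n + 2), (α + n + 1 - k) * cc α n k * t ^ k := by
    rw [Finset.sum_range_succ _ (n + 1), cc_top]; simp
  rw [e1, e2, Finset.sum_range_succ', PP, Finset.sum_range_succ', cc_zero,
    add_right_comm (∑ k ∈ Finset.range (n + 1), _),
    ← Finset.sum_add_distrib]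
  congr 1
  · refine Finset.sum_congr rfl fun k hk => ?_
    rw [cc_succ α n k (by simp at hk; omega)]
    push_cast; ring
  · simp

lemma hasDeriv_PP (α : ℝ) (n : ℕ) (t : ℝ) : HasDerivAt (PP α n) (PD α n t) t := by
  unfold PP PD
  exact HasDerivAt.fun_sum fun k _ => (hasDerivAt_pow k t).const_mul _

lemma hasDeriv_h (β t : ℝ) (ht : 0 < t) :
    HasDerivAt (fun s : ℝ => (1 + 1 / s) ^ β) (-(β / (t * (1 + t))) * (1 + 1 / t) ^ β) t := by
  have h0 : (0 : ℝ) < 1 + 1 / t := by positivity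
  have h1 : HasDerivAt (fun s : ℝ => 1 + 1 / s) (-(t ^ 2)⁻¹) t := by
    simpa [one_div] using (hasDerivAt_inv ht.ne').const_add 1
  convert h1.rpow_const (p := β) (Or.inl h0.ne') using 1
  rw [Real.rpow_sub_one h0.ne']
  field_simp
  ring

lemma hasDeriv_GG (α : ℝ) (n : ℕ) (t : ℝ) (ht : 0 < t) :
    HasDerivAt (GG α n) (GG α (n + 1) t) t := by
  have hd : HasDerivAt (fun s : ℝ => s ^ (n + 1) * (1 + s) ^ (n + 2))
      (((n : ℝ) + 1) * t ^ n * (1 + t) ^ (n + 2) +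
        t ^ (n + 1) * (((n : ℝ) + 2) * (1 + t) ^ (n + 1))) t := by
    have a := hasDerivAt_pow (n + 1) t
    have b := ((hasDerivAt_id t).const_add 1).pow (n + 2)
    refine (a.mul b).congr_deriv ?_
    simp
  have hne : t ^ (n + 1) * (1 + t) ^ (n + 2) ≠ 0 := by positivity
  have h := (((hasDerivAt_const t ((-1 : ℝ) ^ (n + 1))).div hd hne).mul
    (hasDeriv_h α t ht)).mul (hasDeriv_PP α n t)
  refine h.congr_deriv ?_
  simp only [GG, PP_rec, Pi.mul_apply, Pi.div_apply]
  have : (1 + t) ≠ 0 := by positivity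
  generalize (1 + 1 / t) ^ α = X
  field_simp
  ring

lemma hasDeriv_H (α : ℝ) (hα : α ∈ Set.Ioo (0 : ℝ) 1) (t : ℝ) (ht : 0 < t) :
    HasDerivAt (fun s : ℝ => (1 + 1 / s) ^ α / α - (1 + 1 / s) ^ (α - 1) / (α - 1))
      (GG α 0 t) t := by
  have h0 : (0 : ℝ) < 1 + 1 / t := by positivity
  have ha : α ≠ 0 := hα.1.ne'
  have hb : α - 1 ≠ 0 := by have := hα.2; intro h; linarith
  refine (((hasDeriv_h α t ht).div_const α).sub
    ((hasDeriv_h (α - 1) t ht).div_const (α - 1))).congr_deriv ?_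
  rw [Real.rpow_sub_one h0.ne']
  simp only [GG, PP, cc]
  simp
  have : (1 + t) ≠ 0 := by positivity
  have e : 1 + t⁻¹ = (1 + t) / t := by field_simp; ring
  generalize (1 + t⁻¹) ^ α = X
  rw [e]
  field_simp
  ring

lemma main_aux (α : ℝ) (hα : α ∈ Set.Ioo (0 : ℝ) 1) (n : ℕ) : ∀ t : ℝ, 0 < t →
    iteratedDeriv (n + 1)
      (fun s : ℝ => (1 + 1 / s) ^ α / α - (1 + 1 / s) ^ (α - 1) / (α - 1)) t = GG α n t := by
  induction n with
  | zero => 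
    intro t ht
    rw [zero_add, iteratedDeriv_one]
    exact (hasDeriv_H α hα t ht).deriv
  | succ n ih =>
    intro t ht
    rw [iteratedDeriv_succ]
    refine Eq.trans (Filter.EventuallyEq.deriv_eq ?_) (hasDeriv_GG α n t ht).deriv
    filter_upwards [lt_mem_nhds ht] with s hs using ih s hs

theorem H_alpha_iterated_deriv_formula
    (α : ℝ) (hα : α ∈ Set.Ioo (0 : ℝ) 1)
    (m : ℕ) (hm : 1 ≤ m) (t : ℝ) (ht : 0 < t) :
    iteratedDeriv m
        (fun s : ℝ => (1 + 1 / s) ^ α / α - (1 + 1 / s) ^ (α - 1) / (α - 1)) t =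
      (-1 : ℝ) ^ m / (t ^ m * (1 + t) ^ (m + 1)) * (1 + 1 / t) ^ α *
        ∑ k ∈ Finset.range m,
          ((k.factorial : ℝ) * ((m + 1).choose k : ℝ) * ((m - 1).choose k : ℝ) *
            ∏ ℓ ∈ Finset.range (m - k - 1), (α + (ℓ + 1))) * t ^ k := by
  obtain ⟨n, rfl⟩ : ∃ n, m = n + 1 := ⟨m - 1, by omega⟩
  rw [main_aux α hα n t ht, GG, PP]
  congr 1
  refine Finset.sum_congr rfl fun k _ => ?_
  rw [cc, show n + 1 - k - 1 = n - k by omega]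
  rfl
end

section
/- For every α ∈ (0, 1), the function H_α(t) = h_α(t)/α − h_{α−1}(t)/(α−1), where h_β(t) = (1 + 1/t)^β, is completely monotonic on (0, ∞): H_α has derivatives of all orders on (0,∞) and (-1)^n H_α^(n)(t) ≥ 0 for all t > 0 and all integers n ≥ 0. -/
open Real

theorem aux_contDiffAt (a b : ℝ) (n : WithTop ℕ∞) (t : ℝ) (ht : 0 < t) :
    ContDiffAt ℝ n (fun s : ℝ => s ^ a * (s + 1) ^ b) t := by
  apply ContDiffAt.mul
  · exact contDiffAt_id.rpow_const_of_ne ht.ne'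
  · exact (contDiffAt_id.add contDiffAt_const).rpow_const_of_ne (by simp; positivity)

theorem aux_cm (n : ℕ) : ∀ a b : ℝ, 0 ≤ a → 0 ≤ b → ∀ t : ℝ, 0 < t →
    0 ≤ (-1 : ℝ) ^ n * iteratedDeriv n (fun s : ℝ => s ^ (-a) * (s + 1) ^ (-b)) t := by
  induction n with
  | zero =>
    intro a b _ _ t ht
    simp only [pow_zero, iteratedDeriv_zero, one_mul]
    positivity
  | succ n ih =>
    intro a b ha hb t ht
    rw [iteratedDeriv_succ']
    have h : deriv (fun s : ℝ => s ^ (-a) * (s + 1) ^ (-b)) =ᶠ[nhds t]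
        (fun s : ℝ => (-a) * (s ^ (-(a + 1)) * (s + 1) ^ (-b))
          + (-b) * (s ^ (-a) * (s + 1) ^ (-(b + 1)))) := by
      filter_upwards [lt_mem_nhds ht] with s hs
      have h1 : HasDerivAt (fun s : ℝ => s ^ (-a)) (-a * s ^ (-a - 1)) s :=
        Real.hasDerivAt_rpow_const (Or.inl hs.ne')
      have h2 : HasDerivAt (fun s : ℝ => (s + 1) ^ (-b)) (1 * -b * (s + 1) ^ (-b - 1)) s :=
        ((hasDerivAt_id s).add_const 1).rpow_const (Or.inl (by simp; positivity))
      have h3 := (h1.mul h2).deriv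
      have e1 : -(a + 1) = -a - 1 := by ring
      have e2 : -(b + 1) = -b - 1 := by ring
      rw [e1, e2]
      refine Eq.trans h3 ?_
      ring
    rw [h.iteratedDeriv_eq]
    have c1 := aux_contDiffAt (-(a + 1)) (-b) n t ht
    have c2 := aux_contDiffAt (-a) (-(b + 1)) n t ht
    rw [iteratedDeriv_fun_add (contDiffAt_const.mul c1) (contDiffAt_const.mul c2),
      iteratedDeriv_const_mul _ c1, iteratedDeriv_const_mul _ c2]
    have p1 := mul_nonneg ha (ih (a + 1) b (by linarith) hb t ht)
    have p2 := mul_nonneg hb (ih a (b + 1) ha (by linarith) t ht)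
    rw [pow_succ]
    linarith

theorem H_alpha_completely_monotonic
    (α : ℝ) (hα : α ∈ Set.Ioo (0 : ℝ) 1) :
    ContDiffOn ℝ (⊤ : ℕ∞)
        (fun s : ℝ => (1 + 1 / s) ^ α / α - (1 + 1 / s) ^ (α - 1) / (α - 1))
        (Set.Ioi 0) ∧
      ∀ n : ℕ, ∀ t : ℝ, 0 < t →
        0 ≤ (-1 : ℝ) ^ n *
          iteratedDeriv n
            (fun s : ℝ => (1 + 1 / s) ^ α / α - (1 + 1 / s) ^ (α - 1) / (α - 1)) t := by
  obtain ⟨h0, h1⟩ := hα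
  constructor
  · intro s hs
    have hs : 0 < s := hs
    have hb : ContDiffAt ℝ (⊤ : ℕ∞) (fun s : ℝ => 1 + 1 / s) s :=
      contDiffAt_const.add (contDiffAt_const.div contDiffAt_id hs.ne')
    have hp : 1 + 1 / s ≠ 0 := by positivity
    exact (((hb.rpow_const_of_ne hp).div_const _).sub
      ((hb.rpow_const_of_ne hp).div_const _)).contDiffWithinAt
  · intro n t ht
    cases n with
    | zero =>
      simp only [pow_zero, iteratedDeriv_zero, one_mul]
      have : (1 + 1 / t) ^ (α - 1) / (α - 1) ≤ 0 :=
        div_nonpos_of_nonneg_of_nonpos (by positivity) (by linarith)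
      have : 0 ≤ (1 + 1 / t) ^ α / α := by positivity
      linarith
    | succ n =>
      rw [iteratedDeriv_succ']
      have h : deriv (fun s : ℝ => (1 + 1 / s) ^ α / α - (1 + 1 / s) ^ (α - 1) / (α - 1))
          =ᶠ[nhds t] (fun s : ℝ => (-1) * (s ^ (-(1 + α)) * (s + 1) ^ (-(2 - α)))) := by
        filter_upwards [lt_mem_nhds ht] with s hs
        have hp : 1 + 1 / s ≠ 0 := by positivity
        have hb : HasDerivAt (fun s : ℝ => 1 + 1 / s) (-(s ^ 2)⁻¹) s := by
          simpa using (hasDerivAt_inv hs.ne').const_add 1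
        have h3 := (((hb.rpow_const (p := α) (Or.inl hp)).div_const α).sub
          ((hb.rpow_const (p := α - 1) (Or.inl hp)).div_const (α - 1))).deriv
        refine Eq.trans h3 ?_
        have e : 1 + 1 / s = (s + 1) / s := by field_simp
        have q1 : (1 + 1 / s) ^ (α - 1) = (1 + 1 / s) ^ (α - 2) * (1 + 1 / s) := by
          rw [← Real.rpow_add_one hp]; congr 1; ring
        have q2 : (1 + 1 / s) ^ (α - 2) = (s + 1) ^ (-(2 - α)) * s ^ (2 - α) := by
          rw [e, Real.div_rpow (by positivity) hs.le, div_eq_mul_inv, ← Real.rpow_neg hs.le]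
          congr 2 <;> ring
        have q3 : s ^ (2 - α) = s ^ (-(1 + α)) * s ^ 3 := by
          rw [← Real.rpow_natCast, ← Real.rpow_add hs]; congr 1; push_cast; ring
        have q4 : α - 1 - 1 = α - 2 := by ring
        have hα1 : α - 1 ≠ 0 := by linarith
        rw [q4, q1, q2, q3]
        field_simp
        ring
      rw [h.iteratedDeriv_eq, iteratedDeriv_const_mul _ (aux_contDiffAt _ _ n t ht), pow_succ]
      have := aux_cm n (1 + α) (2 - α) (by linarith) (by linarith) t ht
      linarith
end

section
/- Let x > y > 0. Then for every real t > −y, the logarithmic mean admits the integral representation L_{x,y}(t) = L(x,y) + t + ((x−y)/π) · ∫₀^∞ (P_{x,y}(s)/s) · e^{−sy} · (1 − e^{−st}) ds, where P_{x,y}(s) = ∫₀¹ sin(λπ) · F(λ, (x−y)s) dλ and F(λ,s) = ∫₀¹ (1/u − 1)^λ (1 − λ/(1−u)) e^{−us} du. -/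
open Real MeasureTheory

/-- The function `F(λ, s)` from the paper. -/
noncomputable def paperF (lam s : ℝ) : ℝ :=
  ∫ u in (0 : ℝ)..1, (1 / u - 1) ^ lam * (1 - lam / (1 - u)) * Real.exp (-u * s)

/-- The function `P_{x,y}(s)` from the paper. -/
noncomputable def paperP (x y s : ℝ) : ℝ :=
  ∫ lam in (0 : ℝ)..1, Real.sin (lam * π) * paperF lam ((x - y) * s)


open Set in
lemma beta_int {l : ℝ} (h0 : 0 < l) (h1 : l < 1) :
    IntegrableOn (fun u : ℝ => u ^ (-l) * (1 - u) ^ (l - 1)) (Ioo 0 1) := by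
  have hc := Complex.betaIntegral_convergent (u := ((1 - l : ℝ) : ℂ)) (v := (l : ℂ))
    (by simp; exact h1) (by simpa using h0)
  rw [intervalIntegrable_iff_integrableOn_Ioo_of_le (by norm_num)] at hc
  have := hc.re
  refine IntegrableOn.congr_fun this ?_ measurableSet_Ioo
  intro u hu
  have e1 : ((u : ℂ) ^ (((1 - l : ℝ) : ℂ) - 1)) = ((u ^ (-l) : ℝ) : ℂ) := by
    rw [Complex.ofReal_cpow hu.1.le]; congr 1; push_cast; ring
  have e2 : ((1 - (u : ℂ)) ^ ((l : ℂ) - 1)) = (((1 - u) ^ (l - 1) : ℝ) : ℂ) := by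
    rw [Complex.ofReal_cpow (by linarith [hu.2])]; push_cast; rfl
  simp only [e1, e2]
  rw [← Complex.ofReal_mul]
  simp

open Set in
lemma beta_val {l : ℝ} (h0 : 0 < l) (h1 : l < 1) :
    ∫ u in Ioo (0:ℝ) 1, u ^ (-l) * (1 - u) ^ (l - 1) = π / Real.sin (l * π) := by
  have hb : ((∫ u in Ioo (0:ℝ) 1, u ^ (-l) * (1 - u) ^ (l - 1) : ℝ) : ℂ)
      = Complex.betaIntegral ((1 - l : ℝ) : ℂ) (l : ℂ) := by
    unfold Complex.betaIntegral
    rw [intervalIntegral.integral_of_le (by norm_num), integral_Ioc_eq_integral_Ioo,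
      ← integral_complex_ofReal]
    refine setIntegral_congr_fun measurableSet_Ioo ?_
    intro u hu
    have e1 : ((u : ℂ) ^ (((1 - l : ℝ) : ℂ) - 1)) = ((u ^ (-l) : ℝ) : ℂ) := by
      rw [Complex.ofReal_cpow hu.1.le]; congr 1; push_cast; ring
    have e2 : ((1 - (u : ℂ)) ^ ((l : ℂ) - 1)) = (((1 - u) ^ (l - 1) : ℝ) : ℂ) := by
      rw [Complex.ofReal_cpow (by linarith [hu.2])]; push_cast; rfl
    simp only [e1, e2]
    rw [← Complex.ofReal_mul]
  have hg := Complex.Gamma_mul_Gamma_eq_betaIntegral (s := ((1 - l : ℝ) : ℂ)) (t := (l : ℂ))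
    (by simp; exact h1) (by simpa using h0)
  rw [← hb] at hg
  have h2 : ((1 - l : ℝ) : ℂ) + (l : ℂ) = 1 := by push_cast; ring
  rw [h2, Complex.Gamma_one, one_mul, Complex.Gamma_ofReal, Complex.Gamma_ofReal] at hg
  have hg' : Real.Gamma (1 - l) * Real.Gamma l = ∫ u in Ioo (0:ℝ) 1, u ^ (-l) * (1 - u) ^ (l - 1) := by exact_mod_cast hg
  rw [← hg', mul_comm, Real.Gamma_mul_Gamma_one_sub, mul_comm l]

open Set in
lemma K_val {l w : ℝ} (h0 : 0 < l) (h1 : l < 1) (hw : 0 < w) :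
    ∫ u in Ioo (0:ℝ) 1, u ^ (-l) * (1 - u) ^ (l - 1) / (u + w) =
      π / Real.sin (l * π) * (w ^ (-l) * (1 + w) ^ (l - 1)) := by
  rw [← beta_val h0 h1]
  have himg : (fun u : ℝ => (1 + w) * u / (u + w)) '' Ioo 0 1 = Ioo 0 1 := by
    ext v
    constructor
    · rintro ⟨u, hu, rfl⟩
      have := hu.1
      have := hu.2
      have hp : 0 < u + w := by linarith
      refine ⟨by positivity, ?_⟩
      simp only
      rw [div_lt_one hp]
      nlinarith
    · intro hv
      have hv1 := hv.1
      have hv2 := hv.2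
      have hp : 0 < 1 + w - v := by linarith
      refine ⟨w * v / (1 + w - v), ⟨by positivity, ?_⟩, ?_⟩
      · rw [div_lt_one hp]; nlinarith
      · simp only
        have : w * v / (1 + w - v) + w = w * (1 + w) / (1 + w - v) := by field_simp; ring
        rw [this]
        field_simp
  have hinj : InjOn (fun u : ℝ => (1 + w) * u / (u + w)) (Ioo 0 1) := by
    intro a ha b hb hab
    have ha1 := ha.1
    have hb1 := hb.1
    have : 0 < a + w := by linarith
    have : 0 < b + w := by linarith
    simp only at hab
    rw [div_eq_div_iff (by positivity) (by positivity)] at hab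
    have : (1 + w) * w * (a - b) = 0 := by linarith
    have h3 : a - b = 0 := by
      rcases mul_eq_zero.1 this with h | h
      · exact absurd h (by positivity)
      · exact h
    linarith
  have hder : ∀ u ∈ Ioo (0:ℝ) 1, HasDerivWithinAt (fun u : ℝ => (1 + w) * u / (u + w))
      ((1 + w) * w / (u + w) ^ 2) (Ioo 0 1) u := by
    intro u hu
    have : 0 < u + w := by linarith [hu.1]
    have h := ((hasDerivAt_id u).const_mul (1 + w)).div ((hasDerivAt_id u).add_const w) this.ne'
    refine HasDerivAt.hasDerivWithinAt ?_
    convert! h using 1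
    simp
    ring
  have key := integral_image_eq_integral_abs_deriv_smul measurableSet_Ioo hder hinj
    (fun v => v ^ (-l) * (1 - v) ^ (l - 1))
  rw [himg] at key
  rw [key, ← integral_mul_const]
  refine setIntegral_congr_fun measurableSet_Ioo ?_
  intro u hu
  have hu1 := hu.1
  have hu2 : 0 < 1 - u := by linarith [hu.2]
  have hp : 0 < u + w := by linarith
  have e : 1 - (1 + w) * u / (u + w) = w * (1 - u) / (u + w) := by field_simp; ring
  simp only [smul_eq_mul]
  rw [e, abs_of_pos (by positivity), Real.div_rpow (by positivity) hp.le,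
    Real.div_rpow (by positivity) hp.le, Real.mul_rpow (by positivity) hu1.le,
    Real.mul_rpow hw.le hu2.le]
  have a1 : (1 + w) ^ (-l) * (1 + w) ^ (l - 1) * (1 + w) = 1 := by
    have : 0 < 1 + w := by linarith
    rw [← Real.rpow_add this, ← Real.rpow_add_one this.ne', show -l + (l - 1) + 1 = 0 by ring, Real.rpow_zero]
  have a2 : w ^ (-l) * w ^ (l - 1) * w = 1 := by
    rw [← Real.rpow_add hw, ← Real.rpow_add_one hw.ne', show -l + (l - 1) + 1 = 0 by ring, Real.rpow_zero]
  have a3 : (u + w) ^ (-l) * (u + w) ^ (l - 1) * (u + w) = 1 := by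
    rw [← Real.rpow_add hp, ← Real.rpow_add_one hp.ne', show -l + (l - 1) + 1 = 0 by ring, Real.rpow_zero]
  have b1 : (u + w) ^ (-l) ≠ 0 := (Real.rpow_pos_of_pos hp _).ne'
  have b2 : (u + w) ^ (l - 1) ≠ 0 := (Real.rpow_pos_of_pos hp _).ne'
  field_simp
  linear_combination - w ^ (-l) * w ^ (l - 1) * w * a1 - a2 + a3

open Set in
lemma I_val {l w : ℝ} (h0 : 0 < l) (h1 : l < 1) (hw : 0 < w) :
    ∫ u in Ioo (0:ℝ) 1, (1 - u) ^ l * u ^ (1 - l) / (u + w) =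
      π / Real.sin (l * π) * (1 + w - (1 + w) ^ l * w ^ (1 - l)) -
        ∫ u in Ioo (0:ℝ) 1, u ^ (-l) * (1 - u) ^ (l - 1) * u := by
  have hi := beta_int h0 h1
  have i1 : IntegrableOn (fun u : ℝ => u ^ (-l) * (1 - u) ^ (l - 1) * u) (Ioo 0 1) := by
    refine IntegrableOn.mul_continuousOn_of_subset hi continuous_id.continuousOn measurableSet_Ioo
      isCompact_Icc Ioo_subset_Icc_self
  have i2 : IntegrableOn (fun u : ℝ => u ^ (-l) * (1 - u) ^ (l - 1) / (u + w)) (Ioo 0 1) := by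
    simp only [div_eq_mul_inv]
    refine IntegrableOn.mul_continuousOn_of_subset hi ?_ measurableSet_Ioo
      isCompact_Icc Ioo_subset_Icc_self
    refine ContinuousOn.inv₀ (by fun_prop) ?_
    intro u hu
    linarith [hu.1]
  have e : ∫ u in Ioo (0:ℝ) 1, (1 - u) ^ l * u ^ (1 - l) / (u + w) =
      ∫ u in Ioo (0:ℝ) 1, ((1 + w) * (u ^ (-l) * (1 - u) ^ (l - 1)) -
        u ^ (-l) * (1 - u) ^ (l - 1) * u
        - w * (1 + w) * (u ^ (-l) * (1 - u) ^ (l - 1) / (u + w))) := by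
    refine setIntegral_congr_fun measurableSet_Ioo ?_
    intro u hu
    have hu1 := hu.1
    have hu2 : 0 < 1 - u := by linarith [hu.2]
    have hp : 0 < u + w := by linarith
    have c1 : (1 - u) ^ l = (1 - u) ^ (l - 1) * (1 - u) := by
      rw [← Real.rpow_add_one hu2.ne']; simp
    have c2 : u ^ (1 - l) = u ^ (-l) * u := by
      rw [← Real.rpow_add_one hu1.ne']; congr 1; ring
    simp only [c1, c2]
    field_simp
    ring
  rw [e, integral_sub, integral_sub, integral_const_mul, integral_const_mul, K_val h0 h1 hw,
    beta_val h0 h1]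
  · have hw1 : 0 < 1 + w := by linarith
    have c1 : (1 + w) ^ l = (1 + w) ^ (l - 1) * (1 + w) := by
      rw [← Real.rpow_add_one hw1.ne']; simp
    have c2 : w ^ (1 - l) = w ^ (-l) * w := by
      rw [← Real.rpow_add_one hw.ne']; congr 1; ring
    rw [c1, c2]; ring
  · exact hi.const_mul _
  · exact i1
  · exact (hi.const_mul _).sub i1
  · exact i2.const_mul _

open Set in
lemma F_val {l : ℝ} (h0 : 0 < l) (h1 : l < 1) (s : ℝ) :
    paperF l s = s * ∫ u in Ioo (0:ℝ) 1, (1 - u) ^ l * u ^ (1 - l) * Real.exp (-u * s) := by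
  have hi := beta_int h0 h1
  set f' : ℝ → ℝ := fun u => u ^ (-l) * (1 - u) ^ (l - 1) * ((1 - u - l) * Real.exp (-u * s))
  set h : ℝ → ℝ := fun u => (1 - u) ^ l * u ^ (1 - l) * Real.exp (-u * s)
  have hcont : Continuous h := by
    refine Continuous.mul (Continuous.mul ?_ ?_) (by fun_prop)
    · exact (continuous_const.sub continuous_id).rpow_const (fun _ => Or.inr h0.le)
    · exact continuous_id.rpow_const (fun _ => Or.inr (by linarith))
  have i1 : IntegrableOn f' (Ioo 0 1) := by
    refine IntegrableOn.mul_continuousOn_of_subset hi ?_ measurableSet_Ioo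
      isCompact_Icc Ioo_subset_Icc_self
    fun_prop
  have i2 : IntegrableOn h (Ioo 0 1) :=
    (hcont.integrableOn_Icc (a := 0) (b := 1)).mono_set Ioo_subset_Icc_self
  have ftc := intervalIntegral.integral_eq_sub_of_hasDerivAt_of_le (f := h)
    (f' := fun u => f' u - s * h u) (a := 0) (b := 1) zero_le_one hcont.continuousOn
    (by
      intro u hu
      have hu1 := hu.1
      have hu2 : 0 < 1 - u := by linarith [hu.2]
      have d1 := ((hasDerivAt_id u).const_sub 1).rpow_const (p := l) (Or.inl hu2.ne')
      have d2 := (hasDerivAt_id u).rpow_const (p := 1 - l) (Or.inl hu1.ne')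
      have d3 := ((hasDerivAt_id u).neg.mul_const s).exp
      have d := (d1.mul d2).mul d3
      have c1 : (1 - u) ^ l = (1 - u) ^ (l - 1) * (1 - u) := by
        rw [← Real.rpow_add_one hu2.ne']; simp
      have c2 : u ^ (1 - l) = u ^ (-l) * u := by
        rw [← Real.rpow_add_one hu1.ne']; congr 1; ring
      have c3 : u ^ (1 - l - 1) = u ^ (-l) := by congr 1; ring
      refine HasDerivAt.congr_deriv (f := h) d ?_
      simp only [id, Pi.mul_apply, Pi.neg_apply, c3, f', h]
      simp only [c1, c2]
      ring)
    (by
      rw [intervalIntegrable_iff_integrableOn_Ioo_of_le zero_le_one]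
      exact i1.sub (i2.const_mul s))
  have z0 : h 0 = 0 := by
    simp only [h]; rw [Real.zero_rpow (by linarith)]; simp
  have z1 : h 1 = 0 := by
    simp only [h]; rw [sub_self, Real.zero_rpow (by linarith)]; simp
  rw [z0, z1, intervalIntegral.integral_of_le zero_le_one, integral_Ioc_eq_integral_Ioo,
    integral_sub i1 (i2.const_mul s), integral_const_mul] at ftc
  unfold paperF
  rw [intervalIntegral.integral_of_le zero_le_one, integral_Ioc_eq_integral_Ioo]
  rw [show (∫ u in Ioo (0:ℝ) 1, (1 / u - 1) ^ l * (1 - l / (1 - u)) * Real.exp (-u * s))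
    = ∫ u in Ioo (0:ℝ) 1, f' u from ?_]
  · linarith
  · refine setIntegral_congr_fun measurableSet_Ioo ?_
    intro u hu
    have hu1 := hu.1
    have hu2 : 0 < 1 - u := by linarith [hu.2]
    have c1 : (1 - u) ^ l = (1 - u) ^ (l - 1) * (1 - u) := by
      rw [← Real.rpow_add_one hu2.ne']; simp
    have c0 : 1 / u - 1 = (1 - u) / u := by field_simp
    simp only [f']
    rw [c0, Real.div_rpow hu2.le hu1.le, c1, Real.rpow_neg hu1.le]
    have : u ^ l ≠ 0 := (Real.rpow_pos_of_pos hu1 _).ne'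
    field_simp

open Set in
lemma mean_int {a b : ℝ} (hb : 0 < b) (hab : b < a) :
    IntegrableOn (fun l : ℝ => a ^ l * b ^ (1 - l)) (Ioo 0 1) ∧
    ∫ l in Ioo (0:ℝ) 1, a ^ l * b ^ (1 - l) = (a - b) / (Real.log a - Real.log b) := by
  have ha : 0 < a := by linarith
  have hl : 0 < Real.log a - Real.log b := by linarith [Real.log_lt_log hb hab]
  have hc : Continuous (fun l : ℝ => a ^ l * b ^ (1 - l)) := by
    refine Continuous.mul ?_ ?_
    · exact continuous_const.rpow continuous_id (fun _ => Or.inl ha.ne')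
    · exact continuous_const.rpow (by fun_prop) (fun _ => Or.inl hb.ne')
  refine ⟨(hc.integrableOn_Icc (a := 0) (b := 1)).mono_set Ioo_subset_Icc_self, ?_⟩
  rw [← integral_Ioc_eq_integral_Ioo, ← intervalIntegral.integral_of_le zero_le_one]
  rw [intervalIntegral.integral_eq_sub_of_hasDerivAt
    (f := fun l => a ^ l * b ^ (1 - l) / (Real.log a - Real.log b)) _ (hc.intervalIntegrable _ _)]
  · simp
    ring
  · intro l _
    have d1 := (hasDerivAt_id l).const_rpow ha
    have d2 := ((hasDerivAt_id l).const_sub 1).const_rpow hb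
    refine ((d1.mul d2).div_const (Real.log a - Real.log b)).congr_deriv ?_
    simp only [id]
    field_simp
    ring

open Set in
lemma lap_int {d y t u : ℝ} (hd : 0 < d) (hy : 0 < y) (ht : -y < t) (hu : 0 < u) :
    ∫ s in Ioi (0:ℝ), Real.exp (-u * (d * s)) * (Real.exp (-s * y) * (1 - Real.exp (-s * t))) =
      1 / d * (1 / (u + y / d) - 1 / (u + (y + t) / d)) := by
  have p1 : 0 < u * d + y := by positivity
  have p2 : 0 < u * d + (y + t) := by have := mul_pos hu hd; linarith
  have e : ∀ s : ℝ, Real.exp (-u * (d * s)) * (Real.exp (-s * y) * (1 - Real.exp (-s * t))) =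
      Real.exp (-(u * d + y) * s) - Real.exp (-(u * d + (y + t)) * s) := by
    intro s
    rw [mul_sub, mul_sub, mul_one, ← Real.exp_add, ← Real.exp_add, ← Real.exp_add]
    congr 2 <;> ring
  simp only [e]
  rw [integral_sub (integrableOn_exp_mul_Ioi (by linarith) 0)
    (integrableOn_exp_mul_Ioi (by linarith) 0), integral_exp_mul_Ioi (by linarith),
    integral_exp_mul_Ioi (by linarith)]
  have q1 : u + y / d = (u * d + y) / d := by field_simp
  have q2 : u + (y + t) / d = (u * d + (y + t)) / d := by field_simp
  rw [q1, q2, mul_zero, mul_zero, Real.exp_zero, neg_div_neg_eq, neg_div_neg_eq]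
  field_simp

open Set in
lemma fub_int {d y t : ℝ} (hd : 0 < d) (hy : 0 < y) (ht : -y < t) :
    Integrable (fun q : ℝ × (ℝ × ℝ) => Real.sin (q.2.1 * π) *
      ((1 - q.2.2) ^ q.2.1 * q.2.2 ^ (1 - q.2.1)) * Real.exp (-q.2.2 * (d * q.1)) *
        (Real.exp (-q.1 * y) * (1 - Real.exp (-q.1 * t))))
      ((volume.restrict (Ioi (0:ℝ))).prod
        ((volume.restrict (Ioo (0:ℝ) 1)).prod (volume.restrict (Ioo (0:ℝ) 1)))) := by
  have hE : Integrable (fun s : ℝ => Real.exp (-s * y) * (1 - Real.exp (-s * t)))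
      (volume.restrict (Ioi (0:ℝ))) := by
    have e : ∀ s : ℝ, (Real.exp (-s * y) * (1 - Real.exp (-s * t))) =
      Real.exp (-y * s) - Real.exp (-(y + t) * s) := by
      intro s
      rw [mul_sub, mul_one, ← Real.exp_add]
      congr 2 <;> ring
    simp only [e]
    exact (integrableOn_exp_mul_Ioi (by linarith) 0).sub
      (integrableOn_exp_mul_Ioi (by linarith) 0)
  refine Integrable.bdd_mul (c := 1) (hE.comp_fst _) ?_ ?_
  · exact Measurable.aestronglyMeasurable (by fun_prop)
  · rw [Measure.prod_restrict, Measure.prod_restrict]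
    filter_upwards [ae_restrict_mem (measurableSet_Ioi.prod (measurableSet_Ioo.prod
      measurableSet_Ioo))] with q hq
    obtain ⟨hs, ⟨hl0, hl1⟩, hu0, hu1⟩ := hq
    simp only [mem_Ioi] at hs
    have k1 : |Real.sin (q.2.1 * π)| ≤ 1 := Real.abs_sin_le_one _
    have k2 : |(1 - q.2.2) ^ q.2.1| ≤ 1 := by
      rw [abs_of_nonneg (Real.rpow_nonneg (by linarith) _)]
      exact Real.rpow_le_one (by linarith) (by linarith) hl0.le
    have k3 : |q.2.2 ^ (1 - q.2.1)| ≤ 1 := by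
      rw [abs_of_nonneg (Real.rpow_nonneg (by linarith) _)]
      exact Real.rpow_le_one (by linarith) (by linarith) (by linarith)
    have k4 : |Real.exp (-q.2.2 * (d * q.1))| ≤ 1 := by
      rw [abs_of_nonneg (Real.exp_pos _).le, Real.exp_le_one_iff]
      have : 0 < q.2.2 * (d * q.1) := by positivity
      linarith
    rw [Real.norm_eq_abs, abs_mul, abs_mul, abs_mul]
    refine mul_le_one₀ (mul_le_one₀ k1 (by positivity)
      (mul_le_one₀ k2 (by positivity) k3)) (by positivity) k4

open Set in
lemma P_val {x y s : ℝ} (hxy : y < x) (hs : 0 < s) :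
    paperP x y s / s = (x - y) * ∫ l in Ioo (0:ℝ) 1, ∫ u in Ioo (0:ℝ) 1,
      Real.sin (l * π) * ((1 - u) ^ l * u ^ (1 - l)) * Real.exp (-u * ((x - y) * s)) := by
  unfold paperP
  rw [intervalIntegral.integral_of_le zero_le_one, integral_Ioc_eq_integral_Ioo]
  have : ∫ l in Ioo (0:ℝ) 1, Real.sin (l * π) * paperF l ((x - y) * s) =
      ∫ l in Ioo (0:ℝ) 1, (x - y) * s * ∫ u in Ioo (0:ℝ) 1,
      Real.sin (l * π) * ((1 - u) ^ l * u ^ (1 - l)) * Real.exp (-u * ((x - y) * s)) := by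
    refine setIntegral_congr_fun measurableSet_Ioo ?_
    intro l hl
    simp only
    rw [F_val hl.1 hl.2]
    simp only [mul_assoc]
    rw [integral_const_mul]
    ring
  rw [this, integral_const_mul, mul_right_comm, mul_div_assoc, div_self hs.ne', mul_one]

open Set in
lemma main_int {x y t : ℝ} (hxy : y < x) (hy : 0 < y) (ht : -y < t) :
    ∫ s in Ioi (0 : ℝ), paperP x y s / s * Real.exp (-s * y) * (1 - Real.exp (-s * t)) =
    ∫ l in Ioo (0:ℝ) 1, Real.sin (l * π) *
      ((∫ u in Ioo (0:ℝ) 1, (1 - u) ^ l * u ^ (1 - l) / (u + y / (x - y))) -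
       (∫ u in Ioo (0:ℝ) 1, (1 - u) ^ l * u ^ (1 - l) / (u + (y + t) / (x - y)))) := by
  have hd : 0 < x - y := by linarith
  have hf := fub_int (d := x - y) hd hy ht
  set d := x - y with hdd
  set ν : Measure ℝ := volume.restrict (Ioo (0:ℝ) 1) with hν
  set G : ℝ → ℝ × ℝ → ℝ := fun s p => Real.sin (p.1 * π) *
      ((1 - p.2) ^ p.1 * p.2 ^ (1 - p.1)) * Real.exp (-p.2 * (d * s)) *
        (Real.exp (-s * y) * (1 - Real.exp (-s * t))) with hG
  have hf' : Integrable (Function.uncurry G) ((volume.restrict (Ioi (0:ℝ))).prod (ν.prod ν)) := hf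
  have st1 : ∫ s in Ioi (0 : ℝ), paperP x y s / s * Real.exp (-s * y) * (1 - Real.exp (-s * t)) =
      d * ∫ s in Ioi (0 : ℝ), ∫ p, G s p ∂(ν.prod ν) := by
    rw [← integral_const_mul]
    refine integral_congr_ae ?_
    filter_upwards [ae_restrict_mem measurableSet_Ioi, hf'.prod_right_ae] with s hs hi
    have hi' : Integrable (G s) (ν.prod ν) := hi
    rw [integral_prod _ hi', P_val hxy hs, ← hdd]
    simp only [hG]
    simp only [integral_mul_const]
    ring
  have st2 : ∀ᵐ p ∂(ν.prod ν), ∫ s in Ioi (0 : ℝ), G s p =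
      1 / d * (Real.sin (p.1 * π) * ((1 - p.2) ^ p.1 * p.2 ^ (1 - p.1) / (p.2 + y / d) -
        (1 - p.2) ^ p.1 * p.2 ^ (1 - p.1) / (p.2 + (y + t) / d))) := by
    rw [hν, Measure.prod_restrict]
    filter_upwards [ae_restrict_mem (measurableSet_Ioo.prod measurableSet_Ioo)] with p hp
    simp only [hG]
    have := lap_int hd hy ht hp.2.1
    simp only [mul_assoc] at this ⊢
    rw [integral_const_mul, integral_const_mul, integral_const_mul, this]
    ring
  rw [st1, integral_integral_swap hf', integral_congr_ae st2]
  have hint : Integrable (fun p : ℝ × ℝ => 1 / d * (Real.sin (p.1 * π) * ((1 - p.2) ^ p.1 * p.2 ^ (1 - p.1) / (p.2 + y / d) -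
        (1 - p.2) ^ p.1 * p.2 ^ (1 - p.1) / (p.2 + (y + t) / d)))) (ν.prod ν) :=
    hf'.integral_prod_right.congr st2
  rw [integral_prod _ hint, ← integral_const_mul]
  refine setIntegral_congr_fun measurableSet_Ioo ?_
  intro l hl
  have ic : ∀ w : ℝ, 0 < w → Integrable (fun u : ℝ => (1 - u) ^ l * u ^ (1 - l) / (u + w)) ν := by
    intro w hw
    have : ContinuousOn (fun u : ℝ => (1 - u) ^ l * u ^ (1 - l) / (u + w)) (Icc 0 1) := by
      refine ContinuousOn.div (Continuous.continuousOn (Continuous.mul ?_ ?_)) (by fun_prop) ?_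
      · exact (continuous_const.sub continuous_id).rpow_const (fun _ => Or.inr hl.1.le)
      · exact continuous_id.rpow_const (fun _ => Or.inr (by linarith [hl.2]))
      · intro u hu; linarith [hu.1]
    exact this.integrableOn_Icc.mono_set Ioo_subset_Icc_self
  simp only
  rw [integral_const_mul, integral_const_mul, integral_sub (ic _ (by positivity))
    (ic _ (div_pos (by linarith) hd))]
  field_simp

open Set in
lemma scale {d w l : ℝ} (hd : 0 < d) (hw : 0 < w) :
    (1 + w / d) ^ l * (w / d) ^ (1 - l) = ((d + w) ^ l * w ^ (1 - l)) / d := by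
  have : 1 + w / d = (d + w) / d := by field_simp
  rw [this, Real.div_rpow (by positivity) hd.le, Real.div_rpow hw.le hd.le]
  have e : d ^ l * d ^ (1 - l) = d := by rw [← Real.rpow_add hd]; simp
  have := (Real.rpow_pos_of_pos hd l).ne'
  have := (Real.rpow_pos_of_pos hd (1 - l)).ne'
  rw [div_mul_div_comm, e]

theorem logarithmic_mean_integral_representation
    (x y : ℝ) (hxy : x > y) (hy : 0 < y) (t : ℝ) (ht : -y < t) :
    (x - y) / (Real.log (x + t) - Real.log (y + t)) =
      (x - y) / (Real.log x - Real.log y) + t +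
        (x - y) / π *
          ∫ s in Set.Ioi (0 : ℝ),
            paperP x y s / s * Real.exp (-s * y) * (1 - Real.exp (-s * t)) := by
  have hd : 0 < x - y := by linarith
  rw [main_int hxy hy ht]
  obtain ⟨i1, v1⟩ := mean_int hy hxy
  obtain ⟨i2, v2⟩ := mean_int (a := x + t) (b := y + t) (by linarith) (by linarith)
  have e : ∫ l in Set.Ioo (0:ℝ) 1, Real.sin (l * π) *
      ((∫ u in Set.Ioo (0:ℝ) 1, (1 - u) ^ l * u ^ (1 - l) / (u + y / (x - y))) -
       (∫ u in Set.Ioo (0:ℝ) 1, (1 - u) ^ l * u ^ (1 - l) / (u + (y + t) / (x - y)))) =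
      ∫ l in Set.Ioo (0:ℝ) 1, (π / (x - y)) *
        ((x + t) ^ l * (y + t) ^ (1 - l) - x ^ l * y ^ (1 - l) - t) := by
    refine setIntegral_congr_fun measurableSet_Ioo ?_
    intro l hl
    have hsin : 0 < Real.sin (l * π) := by
      refine Real.sin_pos_of_pos_of_lt_pi (mul_pos hl.1 Real.pi_pos) ?_
      nlinarith [Real.pi_pos, hl.2]
    simp only
    rw [I_val hl.1 hl.2 (by positivity), I_val hl.1 hl.2 (div_pos (by linarith) hd),
      scale hd hy, scale hd (by linarith), show x - y + y = x by ring,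
      show x - y + (y + t) = x + t by ring]
    field_simp
    ring
  have vt : ∫ l in Set.Ioo (0:ℝ) 1, t = t := by simp
  have it : IntegrableOn (fun _ : ℝ => t) (Set.Ioo (0:ℝ) 1) := by simp
  have e3 := integral_sub (i2.sub i1) it
  simp only [Pi.sub_apply] at e3
  rw [e, integral_const_mul, e3, integral_sub i2 i1, v1, v2, vt]
  have := Real.pi_pos
  rw [show x + t - (y + t) = x - y by ring]
  field_simp
  ring
end
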